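/- Let f : C([n],k) → R, let f₀ and f₁ denote its restrictions by fixing the last coordinate to 0 and 1 respectively, and let S ⊆ [n−1]. Then f̂₀(S)² + f̂₁(S)² = f̂(S)² + f̂(S ∪ {n})². -/

import Mathlib

/-!
Fix `S ⊆ [n]` with the ballot property `s_j ≥ 2j`, and put `s = |S|`. The basis vectors
`P↑_{n,s,k} χ_{n,S}` for different `k` are, up to the factor `(k - s)!`, the restrictions to slices
of one function `G n S` on the cube (`basisVec_eq`), and `G` has a closed recursion in the
last coordinate, `x ∘ b` being the point `x` of `{0,1}^n` extended by `b`: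

* `G (n+1) S (x ∘ b) = G n S x`;
* `G (n+1) (S ∪ {n+1}) (x ∘ 0) = -(|x| - s) / (n - 2s) * G n S x`;
* `G (n+1) (S ∪ {n+1}) (x ∘ 1) = (n - s - |x|) / (n - 2s) * G n S x`.

So on the slice of weight `k` both basis vectors for `[n+1]` lie in the plane spanned by `u` and `v`,
where `u` is `G n S` on the slice of weight `k`, placed on `x_{n+1} = 0`, and `v` is `G n S` on the
slice of weight `k - 1`, placed on `x_{n+1} = 1`. With `p = k - s` and `q = n - k - s + 1` they are
`u + v` and `(-p u + q v) / (n - 2s)`. They are orthogonal because `p ‖u‖² = q ‖v‖²` (`A_rec`), which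
follows from the recursion by induction. The coefficients of `f₀` and `f₁` are those of `f` along
`u` and `v`, so the claim is Parseval's identity in this plane for two orthogonal bases (`plane`).

If one of the four coefficients is zero by convention, then `p` or `q` is zero (or all four
coefficients vanish), `A_rec` makes `v` or `u` vanish, and the remaining terms agree. The case
`p = 0 = q` is excluded by `2s ≤ n` (`Sh_card`).
-/

open scoped Classical

/-- The slice `C([n],k)`: vectors in `{0,1}^n` with exactly `k` ones. -/
abbrev Slice (n k : ℕ) :=
  {x : Fin n → Bool // (Finset.univ.filter fun i => x i = true).card = k}

/-- The up operator `P↑_{n,k}`. -/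
noncomputable def upOp (n k : ℕ) : Matrix (Slice n (k + 1)) (Slice n k) ℝ :=
  Matrix.of fun x y => if ∀ i, y.1 i = true → x.1 i = true then (1 : ℝ) else 0

/-- The down operator `P↓_{n,k}` (the transpose of `P↑_{n,k-1}`); it is the zero
matrix for `k = 0`. -/
noncomputable def downOp (n k : ℕ) : Matrix (Slice n (k - 1)) (Slice n k) ℝ :=
  Matrix.of fun x y => if 0 < k ∧ ∀ i, x.1 i = true → y.1 i = true then (1 : ℝ) else 0

noncomputable def upPathAux (n i : ℕ) : (d : ℕ) → Matrix (Slice n (i + d)) (Slice n i) ℝ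
  | 0 => show Matrix (Slice n (i + 0)) (Slice n i) ℝ from (1 : Matrix (Slice n i) (Slice n i) ℝ)
  | d + 1 => upOp n (i + d) * upPathAux n i d

/-- The iterated up operator `P↑_{n,i,k} = P↑_{n,k-1} ⋯ P↑_{n,i}`. -/
noncomputable def upPath (n i k : ℕ) : Matrix (Slice n k) (Slice n i) ℝ :=
  if h : i ≤ k then
    cast (by rw [Nat.add_sub_cancel' h]) (upPathAux n i (k - i))
  else 0

/-- `P∨_{n,k} = P↑_{n,k-1} P↓_{n,k}`. -/
noncomputable def upDown (n k : ℕ) : Matrix (Slice n k) (Slice n k) ℝ :=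
  if h : 1 ≤ k then
    cast (by rw [Nat.sub_add_cancel h]) (upOp n (k - 1) * downOp n k)
  else 0

/-- `P∧_{n,k} = P↓_{n,k+1} P↑_{n,k}`. -/
noncomputable def downUp (n k : ℕ) : Matrix (Slice n k) (Slice n k) ℝ :=
  downOp n (k + 1) * upOp n k

/-- `S ∈ H_{n,k}`: `S ⊆ {1,…,n}`, `|S| ≤ k`, and the `j`-th smallest element
(1-indexed) is at least `2j`. -/
def IsH (n k : ℕ) (S : Finset ℕ) : Prop :=
  S ⊆ Finset.Icc 1 n ∧ S.card ≤ k ∧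
    ∀ j, j < S.card → 2 * (j + 1) ≤ (S.sort (· ≤ ·)).getD j 0

lemma wcast_false {n : ℕ} (x : Fin (n + 1) → Bool) (h : ¬ x (Fin.last n) = true) :
    (Finset.univ.filter fun i : Fin n => x (Fin.castSucc i) = true).card
      = (Finset.univ.filter fun i : Fin (n + 1) => x i = true).card := by
  rw [Finset.card_filter, Finset.card_filter, Fin.sum_univ_castSucc]
  simp [h]

lemma wcast_true {n : ℕ} (x : Fin (n + 1) → Bool) (h : x (Fin.last n) = true) :
    (Finset.univ.filter fun i : Fin n => x (Fin.castSucc i) = true).card + 1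
      = (Finset.univ.filter fun i : Fin (n + 1) => x i = true).card := by
  rw [Finset.card_filter, Finset.card_filter, Fin.sum_univ_castSucc]
  simp [h]

/-- Forgetting the last coordinate of `x` when it equals `0`. -/
def dropLast {n m : ℕ} (x : Slice (n + 1) m) (h : ¬ x.1 (Fin.last n) = true) : Slice n m :=
  ⟨fun i => x.1 (Fin.castSucc i), by
    show (Finset.univ.filter fun i : Fin n => x.1 (Fin.castSucc i) = true).card = m
    rw [wcast_false x.1 h]; exact x.2⟩

/-- Forgetting the last coordinate of `x` when it equals `1`. -/
def dropLastT {n m : ℕ} (x : Slice (n + 1) m) (h : x.1 (Fin.last n) = true) : Slice n (m - 1) :=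
  ⟨fun i => x.1 (Fin.castSucc i), by
    show (Finset.univ.filter fun i : Fin n => x.1 (Fin.castSucc i) = true).card = m - 1
    have h1 := wcast_true x.1 h
    have h2 := x.2
    omega⟩

/-- The vector `χ_{n,S}` on the slice `C([n],|S|)`, defined recursively. -/
noncomputable def chi : (n : ℕ) → (S : Finset ℕ) → Slice n S.card → ℝ
  | 0, _ => fun _ => 1
  | n + 1, S =>
    if hS : n + 1 ∈ S then
      fun x =>
        if hx : x.1 (Fin.last n) = true then
          chi n (S.erase (n + 1)) ⟨(dropLastT x hx).1, by
            show (Finset.univ.filter fun i : Fin n => x.1 (Fin.castSucc i) = true).card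
              = (S.erase (n + 1)).card
            rw [Finset.card_erase_of_mem hS]
            exact (dropLastT x hx).2⟩
        else
          -(∑ y : Slice n (S.erase (n + 1)).card,
              (if ∀ i, y.1 i = true → (dropLast x hx).1 i = true then (1 : ℝ) else 0) *
                chi n (S.erase (n + 1)) y) / ((n : ℝ) + 1 - 2 * S.card + 1)
    else
      fun x =>
        if hx : x.1 (Fin.last n) = true then 0
        else chi n S (dropLast x hx)

/-- The basis vector `P↑_{n,|S|,k} χ_{n,S}` of `R^{C([n],k)}`. -/
noncomputable def basisVec (n k : ℕ) (S : Finset ℕ) : Slice n k → ℝ :=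
  (upPath n S.card k).mulVec (chi n S)

/-- The Fourier coefficient `f̂(S)`, equal to `0` when `S ∉ H_{n,min{k,n-k}}`. -/
noncomputable def fourierSlice (n k : ℕ) (f : Slice n k → ℝ) (S : Finset ℕ) : ℝ :=
  if IsH n (min k (n - k)) S then
    (∑ x, f x * basisVec n k S x) / Real.sqrt (∑ x, basisVec n k S x ^ 2)
  else 0

/-- The Hamming weight of `z ∈ {0,1}^t`. -/
def wt {t : ℕ} (z : Fin t → Bool) : ℕ :=
  (Finset.univ.filter fun i => z i = true).card

/-- The concatenation `x ∘ z ∈ {0,1}^n` of `x ∈ {0,1}^{n-t}` with `z ∈ {0,1}^t`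
(with `z` occupying the last `t` coordinates). -/
def catFun (n t : ℕ) (x : Fin (n - t) → Bool) (z : Fin t → Bool) : Fin n → Bool :=
  fun i =>
    if h : (i : ℕ) < n - t then x ⟨i, h⟩
    else if h2 : (i : ℕ) - (n - t) < t then z ⟨(i : ℕ) - (n - t), h2⟩
    else false

/-- The restriction `f_z : C([n-t], k-|z|) → ℝ`, `f_z(x) = f(x ∘ z)`; it is
(the everywhere-zero function on) the empty function when `|z| > k`. -/
noncomputable def restrict (n k t : ℕ) (f : Slice n k → ℝ) (z : Fin t → Bool) :
    Slice (n - t) (k - wt z) → ℝ :=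
  fun x =>
    if h : (Finset.univ.filter fun i => catFun n t x.1 z i = true).card = k then
      f ⟨catFun n t x.1 z, h⟩
    else 0

/-- The Fourier coefficient `f̂_z(S)` of the restriction `f_z`. -/
noncomputable def fourierSliceRestrict (n k t : ℕ) (f : Slice n k → ℝ) (z : Fin t → Bool)
    (S : Finset ℕ) : ℝ :=
  fourierSlice (n - t) (k - wt z) (restrict n k t f z) S

/-- The adjacency matrix `A_{n,k}` of the Johnson graph. -/
noncomputable def johnsonAdj (n k : ℕ) : Matrix (Slice n k) (Slice n k) ℝ :=
  Matrix.of fun x y =>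
    if (Finset.univ.filter fun i => x.1 i ≠ y.1 i).card = 2 then (1 : ℝ) else 0

/-! ### A closed recursion for the basis functions -/

/-- The function on the whole cube `{0,1}^n` which, for `S` as in `H_{n,k}`, restricts to
`P↑_{n,|S|,k} χ_{n,S} / (k - |S|)!` on every slice `C([n],k)`. It is defined by recursion on the
last coordinate, with no condition on `S`; when the denominator `n - 2(|S| - 1)` of the step from
`n` to `n + 1` is zero, the value is the junk value `0`. -/
noncomputable def G : (n : ℕ) → Finset ℕ → (Fin n → Bool) → ℝ
  | 0, S, _ => if S = ∅ then 1 else 0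
  | n + 1, S, x =>
    if n + 1 ∈ S then
      (if x (Fin.last n) = true then (n : ℝ) + 1 - S.card - wt (fun i : Fin n => x i.castSucc)
        else -((wt (fun i : Fin n => x i.castSucc) : ℝ) - S.card + 1))
        / ((n : ℝ) + 2 - 2 * S.card) * G n (S.erase (n + 1)) (fun i : Fin n => x i.castSucc)
    else G n S (fun i : Fin n => x i.castSucc)

/-- The point `x ∘ b` of `{0,1}^{n+1}` obtained by appending the last coordinate `b`. -/
def snocB {n : ℕ} (x : Fin n → Bool) (b : Bool) : Fin (n + 1) → Bool :=
  Fin.snoc (α := fun _ => Bool) x b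

@[simp] lemma snocB_last {n : ℕ} (x : Fin n → Bool) (b : Bool) :
    snocB x b (Fin.last n) = b := by simp [snocB]

@[simp] lemma snocB_castSucc {n : ℕ} (x : Fin n → Bool) (b : Bool) (i : Fin n) :
    snocB x b i.castSucc = x i := by simp [snocB]

lemma snocB_init {n : ℕ} (x : Fin (n + 1) → Bool) :
    snocB (fun i => x i.castSucc) (x (Fin.last n)) = x := by
  funext i
  refine Fin.lastCases ?_ (fun i => ?_) i <;> simp

lemma wt_snocB {n : ℕ} (x : Fin n → Bool) (b : Bool) :
    wt (snocB x b) = wt x + if b = true then 1 else 0 := by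
  unfold wt
  rw [Finset.card_filter, Finset.card_filter, Fin.sum_univ_castSucc]
  simp

@[simp] lemma wt_snocB_false {n : ℕ} (x : Fin n → Bool) : wt (snocB x false) = wt x := by
  simp [wt_snocB]

@[simp] lemma wt_snocB_true {n : ℕ} (x : Fin n → Bool) : wt (snocB x true) = wt x + 1 := by
  simp [wt_snocB]

lemma sum_snocB {n : ℕ} (F : (Fin (n + 1) → Bool) → ℝ) :
    ∑ x, F x = ∑ x : Fin n → Bool, F (snocB x false) + ∑ x : Fin n → Bool, F (snocB x true) := by
  rw [← (Fin.snocEquiv (fun _ : Fin (n + 1) => Bool)).sum_comp, Fintype.sum_prod_type]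
  simp only [Fintype.sum_bool]
  rw [add_comm]
  rfl

lemma forall_snocB {n : ℕ} (y x : Fin n → Bool) (b c : Bool) :
    (∀ i, snocB y b i = true → snocB x c i = true) ↔
      (∀ i, y i = true → x i = true) ∧ (b = true → c = true) := by
  rw [Fin.forall_fin_succ']
  simp

lemma G_of_not_mem {n : ℕ} {S : Finset ℕ} (h : n + 1 ∉ S) (x : Fin n → Bool) (b : Bool) :
    G (n + 1) S (snocB x b) = G n S x := by
  simp [G, h]

lemma G_mem_false {n : ℕ} {S : Finset ℕ} (h : n + 1 ∈ S) (x : Fin n → Bool) :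
    G (n + 1) S (snocB x false) =
      -((wt x : ℝ) - (S.erase (n + 1)).card) / ((n : ℝ) - 2 * (S.erase (n + 1)).card)
        * G n (S.erase (n + 1)) x := by
  have := Finset.card_erase_add_one h
  simp only [G, h, ← this, snocB_last, snocB_castSucc]
  push_cast
  simp
  left
  ring_nf

lemma G_mem_true {n : ℕ} {S : Finset ℕ} (h : n + 1 ∈ S) (x : Fin n → Bool) :
    G (n + 1) S (snocB x true) =
      ((n : ℝ) - (S.erase (n + 1)).card - wt x) / ((n : ℝ) - 2 * (S.erase (n + 1)).card)
        * G n (S.erase (n + 1)) x := by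
  have := Finset.card_erase_add_one h
  simp only [G, h, ← this, snocB_last, snocB_castSucc]
  push_cast
  simp
  left
  ring_nf

lemma eq_of_le_of_wt {n : ℕ} {y x : Fin n → Bool} (h : ∀ i, y i = true → x i = true)
    (hw : wt y = wt x) : y = x := by
  have hs : (Finset.univ.filter fun i => y i = true) = Finset.univ.filter fun i => x i = true := by
    apply Finset.eq_of_subset_of_card_le
    · intro i; simpa using h i
    · exact hw.ge
  funext i
  have := Finset.ext_iff.1 hs i
  simp at this
  exact this

/-- The up operator acts on `G n S` as a scalar: the sum over the lower covers of `x` in the cube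
is `(|x| - |S|) G n S x`. -/
lemma G_up (n : ℕ) (S : Finset ℕ) (x : Fin n → Bool) :
    ∑ y : Fin n → Bool, (if (∀ i, y i = true → x i = true) ∧ wt y + 1 = wt x then G n S y else 0)
      = ((wt x : ℝ) - S.card) * G n S x := by
  induction n generalizing S with
  | zero =>
    have : wt x = 0 := by simp [wt]
    by_cases hS : S = ∅ <;> simp [G, this, hS]
  | succ n ih =>
    obtain ⟨x, b, rfl⟩ : ∃ x' b, x = snocB x' b := ⟨_, _, (snocB_init x).symm⟩
    -- A point below `x` of the same weight is `x` itself.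
    have hd : ∑ y : Fin n → Bool,
        (if (∀ i, y i = true → x i = true) ∧ wt y = wt x then G (n + 1) S (snocB y false) else 0)
        = G (n + 1) S (snocB x false) := by
      rw [Finset.sum_eq_single x]
      · simp
      · intro y _ hy
        rw [if_neg]
        rintro ⟨h1, h2⟩
        exact hy (eq_of_le_of_wt h1 h2)
      · simp
    rw [sum_snocB]
    by_cases hS : n + 1 ∈ S
    · have hc : (S.card : ℝ) = (S.erase (n + 1)).card + 1 := by
        exact_mod_cast (Finset.card_erase_add_one hS).symm
      have hi := ih (S.erase (n + 1)) x
      -- On the lower covers of `x` the weight is constant, so a weight factor comes out of the sum.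
      have key : ∀ g : ℝ → ℝ, ∑ y : Fin n → Bool,
          (if (∀ i, y i = true → x i = true) ∧ wt y + 1 = wt x then
            g (wt y) * G n (S.erase (n + 1)) y else 0)
          = g (wt x - 1) * (((wt x : ℝ) - (S.erase (n + 1)).card) * G n (S.erase (n + 1)) x) := by
        intro g
        rw [← hi, Finset.mul_sum]
        refine Finset.sum_congr rfl fun y _ => ?_
        split_ifs with h
        · rw [← h.2]; simp
        · simp
      cases b
      · simp only [forall_snocB, wt_snocB_false, wt_snocB_true]
        simp only [G_mem_false hS, G_mem_true hS, hc]
        have k1 := key (fun w => -(w - (S.erase (n + 1)).card)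
          / ((n : ℝ) - 2 * (S.erase (n + 1)).card))
        simp [-Finset.card_erase_of_mem] at k1 ⊢
        rw [k1]
        ring
      · simp only [forall_snocB, wt_snocB_false, wt_snocB_true]
        have k1 := key (fun w => ((n : ℝ) - (S.erase (n + 1)).card - w)
          / ((n : ℝ) - 2 * (S.erase (n + 1)).card))
        simp [-Finset.card_erase_of_mem] at hd ⊢
        rw [hd]
        simp only [G_mem_false hS, G_mem_true hS, hc]
        rw [k1]
        ring
    · have hi := ih S x
      cases b
      · simp only [forall_snocB, wt_snocB_false, wt_snocB_true, G_of_not_mem hS]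
        simp
        exact hi
      · simp only [forall_snocB, wt_snocB_false, wt_snocB_true]
        simp at hd ⊢
        rw [hd]
        simp only [G_of_not_mem hS]
        rw [hi]
        ring

/-! ### Norms and inner products on a slice -/

/-- The squared norm of `G n S` on the slice of weight `j`. The index is an integer so that passing
from `n` to `n + 1` is uniform in `j`: slices of negative weight contribute `0`. -/
noncomputable def A (n : ℕ) (S : Finset ℕ) (j : ℤ) : ℝ :=
  ∑ x : Fin n → Bool, if (wt x : ℤ) = j then G n S x ^ 2 else 0

/-- The inner product of `F` with `G n S` on the slice of weight `j`. -/
noncomputable def ip (n : ℕ) (S : Finset ℕ) (j : ℤ) (F : (Fin n → Bool) → ℝ) : ℝ :=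
  ∑ x : Fin n → Bool, if (wt x : ℤ) = j then F x * G n S x else 0

lemma A_of_not_mem {n : ℕ} {S : Finset ℕ} (h : n + 1 ∉ S) (j : ℤ) :
    A (n + 1) S j = A n S j + A n S (j - 1) := by
  unfold A
  rw [sum_snocB]
  simp [G_of_not_mem h, eq_sub_iff_add_eq]

lemma ip_of_not_mem {n : ℕ} {S : Finset ℕ} (h : n + 1 ∉ S) (j : ℤ) (F) :
    ip (n + 1) S j F = ip n S j (fun x => F (snocB x false))
      + ip n S (j - 1) (fun x => F (snocB x true)) := by
  unfold ip
  rw [sum_snocB]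
  simp [G_of_not_mem h, eq_sub_iff_add_eq]

lemma A_of_mem {n : ℕ} {S : Finset ℕ} (h : n + 1 ∈ S) (j : ℤ) :
    A (n + 1) S j = ((j - (S.erase (n + 1)).card) ^ 2 * A n (S.erase (n + 1)) j
      + (n - j - (S.erase (n + 1)).card + 1) ^ 2 * A n (S.erase (n + 1)) (j - 1))
        / ((n : ℝ) - 2 * (S.erase (n + 1)).card) ^ 2 := by
  unfold A
  rw [sum_snocB, add_div, Finset.mul_sum, Finset.mul_sum, Finset.sum_div, Finset.sum_div]
  congr 1
  · refine Finset.sum_congr rfl fun x _ => ?_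
    rw [wt_snocB_false, G_mem_false h]
    split_ifs with hx
    · rw [← hx]; push_cast; rw [mul_pow, div_pow]; ring
    · simp
  · refine Finset.sum_congr rfl fun x _ => ?_
    rw [wt_snocB_true, G_mem_true h]
    push_cast
    simp only [eq_sub_iff_add_eq]
    split_ifs with hx
    · rw [← hx]; push_cast; rw [mul_pow, div_pow]; ring
    · simp

lemma ip_of_mem {n : ℕ} {S : Finset ℕ} (h : n + 1 ∈ S) (j : ℤ) (F) :
    ip (n + 1) S j F = (-(j - (S.erase (n + 1)).card)
        * ip n (S.erase (n + 1)) j (fun x => F (snocB x false))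
      + (n - j - (S.erase (n + 1)).card + 1)
        * ip n (S.erase (n + 1)) (j - 1) (fun x => F (snocB x true)))
        / ((n : ℝ) - 2 * (S.erase (n + 1)).card) := by
  unfold ip
  rw [sum_snocB, add_div, Finset.mul_sum, Finset.mul_sum, Finset.sum_div, Finset.sum_div]
  congr 1
  · refine Finset.sum_congr rfl fun x _ => ?_
    rw [wt_snocB_false, G_mem_false h]
    split_ifs with hx
    · rw [← hx]; push_cast; ring
    · simp
  · refine Finset.sum_congr rfl fun x _ => ?_
    rw [wt_snocB_true, G_mem_true h]
    push_cast
    simp only [eq_sub_iff_add_eq]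
    split_ifs with hx
    · rw [← hx]; push_cast; ring
    · simp

/-- Norms on consecutive slices are proportional. This is what makes the restrictions of
`G (n + 1) S` and `G (n + 1) (S ∪ {n + 1})` to a slice orthogonal. -/
lemma A_rec (n : ℕ) (S : Finset ℕ) (j : ℤ) :
    ((j : ℝ) - S.card) * A n S j = ((n : ℝ) - j - S.card + 1) * A n S (j - 1) := by
  induction n generalizing S j with
  | zero =>
    have hw : ∀ x : Fin 0 → Bool, wt x = 0 := by simp [wt]
    by_cases hS : S = ∅
    · subst hS
      simp only [A, hw, G]
      simp
      by_cases h0 : j = 0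
      · subst h0; simp
      · by_cases h1 : j = 1
        · subst h1; simp
        · have h2 : ¬ (0 : ℤ) = j - 1 := by omega
          have h3 : ¬ (0 : ℤ) = j := by omega
          simp [h2, h3]
    · simp [A, G, hS]
  | succ n ih =>
    by_cases hS : n + 1 ∈ S
    · have hc : (S.card : ℝ) = (S.erase (n + 1)).card + 1 := by
        exact_mod_cast (Finset.card_erase_add_one hS).symm
      have h1 := ih (S.erase (n + 1)) j
      have h2 := ih (S.erase (n + 1)) (j - 1)
      rw [A_of_mem hS, A_of_mem hS, hc, mul_div_assoc', mul_div_assoc']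
      congr 1
      push_cast at h2 ⊢
      generalize ((S.erase (n + 1)).card : ℝ) = s at *
      generalize A n (S.erase (n + 1)) j = a at *
      generalize A n (S.erase (n + 1)) (j - 1) = b at *
      generalize A n (S.erase (n + 1)) (j - 1 - 1) = c at *
      linear_combination (j - s - 1) * (j - s) * h1 + (n - j - s + 1) * (n - j - s + 2) * h2
    · have h1 := ih S j
      have h2 := ih S (j - 1)
      rw [A_of_not_mem hS, A_of_not_mem hS]
      push_cast at h2 ⊢
      linear_combination h1 + h2

lemma A_nonneg (n : ℕ) (S : Finset ℕ) (j : ℤ) : 0 ≤ A n S j := by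
  unfold A
  exact Finset.sum_nonneg fun x _ => by split_ifs <;> positivity

lemma ip_eq_zero {n : ℕ} {S : Finset ℕ} {j : ℤ} (h : A n S j = 0) (F) : ip n S j F = 0 := by
  unfold A at h
  rw [Finset.sum_eq_zero_iff_of_nonneg (fun x _ => by split_ifs <;> positivity)] at h
  unfold ip
  refine Finset.sum_eq_zero fun x hx => ?_
  have := h x hx
  split_ifs at this ⊢ with h1
  · simp [pow_eq_zero_iff] at this
    simp [this]
  · rfl

/-! ### The ballot condition defining `H_{n,k}` -/

/-- The condition `s_j ≥ 2j` for all `j` in the definition of `H_{n,k}`. -/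
def Sh (S : Finset ℕ) : Prop := ∀ j, j < S.card → 2 * (j + 1) ≤ (S.sort (· ≤ ·)).getD j 0

lemma sort_insert_last {n : ℕ} {S : Finset ℕ} (hS : S ⊆ Finset.Icc 1 n) :
    (insert (n + 1) S).sort (· ≤ ·) = S.sort (· ≤ ·) ++ [n + 1] := by
  have hn : n + 1 ∉ S := fun h => by have := Finset.mem_Icc.1 (hS h); omega
  refine List.Perm.eq_of_pairwise' (r := (· ≤ ·)) (Finset.pairwise_sort _ _) ?_ ?_
  · rw [List.pairwise_append]
    refine ⟨Finset.pairwise_sort _ _, by simp, ?_⟩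
    intro a ha b hb
    have := Finset.mem_Icc.1 (hS ((Finset.mem_sort _).1 ha))
    simp at hb
    omega
  · rw [List.perm_ext_iff_of_nodup (Finset.sort_nodup _ _)]
    · intro a; simp [or_comm]
    · rw [List.nodup_append]
      refine ⟨Finset.sort_nodup _ _, by simp, ?_⟩
      intro a ha b hb
      have := Finset.mem_Icc.1 (hS ((Finset.mem_sort _).1 ha))
      simp at hb
      omega

lemma Sh_insert {n : ℕ} {S : Finset ℕ} (hS : S ⊆ Finset.Icc 1 n) :
    Sh (insert (n + 1) S) ↔ Sh S ∧ 2 * (S.card + 1) ≤ n + 1 := by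
  have hn : n + 1 ∉ S := fun h => by have := Finset.mem_Icc.1 (hS h); omega
  unfold Sh
  rw [sort_insert_last hS, Finset.card_insert_of_notMem hn]
  constructor
  · intro h
    refine ⟨fun j hj => ?_, ?_⟩
    · have := h j (by omega)
      rwa [List.getD_append _ _ _ _ (by simpa using hj)] at this
    · have := h S.card (by omega)
      rwa [List.getD_append_right _ _ _ _ (by simp), Finset.length_sort, Nat.sub_self] at this
  · rintro ⟨h1, h2⟩ j hj
    rcases Nat.lt_succ_iff_lt_or_eq.1 hj with hj | rfl
    · rw [List.getD_append _ _ _ _ (by simpa using hj)]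
      exact h1 j hj
    · rw [List.getD_append_right _ _ _ _ (by simp), Finset.length_sort, Nat.sub_self]
      exact h2

/-- The largest element of `S` is at least `2|S|` and at most `n`. -/
lemma Sh_card {n : ℕ} {S : Finset ℕ} (hS : S ⊆ Finset.Icc 1 n) (h : Sh S) : 2 * S.card ≤ n := by
  rcases Nat.eq_zero_or_pos S.card with h0 | h0
  · omega
  · have h1 := h (S.card - 1) (by omega)
    have hl : S.card - 1 < (S.sort (· ≤ ·)).length := by rw [Finset.length_sort]; omega
    rw [List.getD_eq_getElem _ _ hl] at h1
    have := Finset.mem_Icc.1 (hS ((Finset.mem_sort _).1 (List.getElem_mem hl)))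
    omega

/-! ### Identification with the Fourier basis -/

lemma G_eq_zero {n : ℕ} {S : Finset ℕ} {x : Fin n → Bool} (h : wt x < S.card) :
    G n S x = 0 := by
  generalize hw : wt x = w at h
  induction w using Nat.strong_induction_on generalizing x with
  | _ w ih =>
    have h1 := G_up n S x
    rw [Finset.sum_eq_zero] at h1
    · have h2 : ((wt x : ℝ) - S.card) ≠ 0 := by
        have : (wt x : ℝ) < S.card := by exact_mod_cast hw ▸ h
        linarith
      exact (mul_eq_zero.1 h1.symm).resolve_left h2
    · intro y _
      split_ifs with hy
      · exact ih (wt y) (by omega) rfl (by omega)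
      · rfl

lemma sum_slice {n k : ℕ} (F : (Fin n → Bool) → ℝ) :
    ∑ x : Slice n k, F x.1 = ∑ x : Fin n → Bool, if wt x = k then F x else 0 := by
  rw [← Finset.sum_filter]
  exact (Finset.sum_subtype _ (fun x => Finset.mem_filter.trans (by simp [wt])) F).symm

lemma sum_le_slice {n k : ℕ} (S : Finset ℕ) (x : Fin n → Bool) (hx : wt x = k + 1) :
    ∑ y : Slice n k, (if ∀ i, y.1 i = true → x i = true then (1 : ℝ) else 0) * G n S y.1
      = ((k : ℝ) + 1 - S.card) * G n S x := by
  have := G_up n S x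
  rw [hx] at this
  push_cast at this
  rw [← this, sum_slice (fun y => (if ∀ i, y i = true → x i = true then (1 : ℝ) else 0) * G n S y)]
  refine Finset.sum_congr rfl fun y _ => ?_
  by_cases h1 : wt y = k <;> by_cases h2 : ∀ i, y i = true → x i = true <;> simp [h1, h2]

/-- On the lowest slice, of weight `|S|`, the function `G n S` is `χ_{n,S}`. The condition `Sh S`
keeps the denominators in the recursion nonzero. -/
lemma chi_eq_G (n : ℕ) (S : Finset ℕ) (hS : S ⊆ Finset.Icc 1 n) (h : Sh S)
    (x : Slice n S.card) : chi n S x = G n S x.1 := by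
  induction n generalizing S with
  | zero =>
    have : S = ∅ := by simpa using hS
    subst this
    simp [chi, G]
  | succ n ih =>
    by_cases hm : n + 1 ∈ S
    · have hsub : S.erase (n + 1) ⊆ Finset.Icc 1 n := by
        intro a ha
        have h1 := Finset.mem_erase.1 ha
        have := Finset.mem_Icc.1 (hS h1.2)
        rw [Finset.mem_Icc]; omega
      have h2 := (Sh_insert hsub).1 (by rwa [Finset.insert_erase hm])
      have ih' := ih _ hsub h2.1
      have hc := Finset.card_erase_add_one hm
      have hcR : (S.card : ℝ) = (S.erase (n + 1)).card + 1 := by exact_mod_cast hc.symm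
      have hxw : wt x.1 = S.card := x.2
      have hs := snocB_init x.1
      by_cases hx : x.1 (Fin.last n) = true
      · simp only [chi, hm, hx, dif_pos]
        rw [ih']
        have hne : (n : ℝ) - 2 * (S.erase (n + 1)).card ≠ 0 := by
          have : (2 * ((S.erase (n + 1)).card + 1) : ℝ) ≤ n + 1 := by exact_mod_cast h2.2
          intro h0
          linarith
        rw [hx] at hs
        rw [← hs] at hxw
        rw [wt_snocB_true] at hxw
        conv_rhs => rw [← hs]
        rw [G_mem_true hm]
        have : (wt (fun i : Fin n => x.1 i.castSucc) : ℝ) = (S.erase (n + 1)).card := by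
          have : wt (fun i : Fin n => x.1 i.castSucc) = (S.erase (n + 1)).card := by omega
          exact_mod_cast this
        rw [this, show (n : ℝ) - (S.erase (n + 1)).card - (S.erase (n + 1)).card
          = n - 2 * (S.erase (n + 1)).card by ring, div_self hne, one_mul]
        rfl
      · simp only [chi, hm, hx, dif_pos]
        simp only [ih']
        have hx' : x.1 (Fin.last n) = false := by simpa using hx
        rw [hx'] at hs
        rw [← hs] at hxw
        rw [wt_snocB_false] at hxw
        rw [dif_neg (by simp), sum_le_slice _ _
          (by show wt (fun i : Fin n => x.1 i.castSucc) = _; omega)]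
        conv_rhs => rw [← hs]
        rw [G_mem_false hm, hxw, hcR]
        rw [show (n : ℝ) + 1 - 2 * ((S.erase (n + 1)).card + 1) + 1
          = n - 2 * (S.erase (n + 1)).card by ring]
        simp only [dropLast]
        ring
    · have hsub : S ⊆ Finset.Icc 1 n := by
        intro a ha
        have := Finset.mem_Icc.1 (hS ha)
        have : a ≠ n + 1 := fun h => hm (h ▸ ha)
        rw [Finset.mem_Icc]; omega
      have ih' := ih _ hsub h
      have hxw : wt x.1 = S.card := x.2
      have hs := snocB_init x.1
      by_cases hx : x.1 (Fin.last n) = true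
      · simp only [chi, hm, hx, dif_pos, dif_neg, not_false_eq_true]
        rw [hx] at hs
        rw [← hs, wt_snocB_true] at hxw
        rw [← hs, G_of_not_mem hm, G_eq_zero (by omega)]
      · simp only [chi, hm, hx, dif_neg, not_false_eq_true, ih']
        conv_rhs => rw [← hs, G_of_not_mem hm]
        rfl

lemma upPathAux_cast {n i d e k : ℕ} (h : d = e) (hk : i + e = k)
    (pf : Matrix (Slice n (i + d)) (Slice n i) ℝ = Matrix (Slice n k) (Slice n i) ℝ) :
    cast pf (upPathAux n i d) = hk ▸ upPathAux n i e := by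
  subst h hk
  rfl

lemma upPath_add (n i d : ℕ) : upPath n i (i + d) = upPathAux n i d := by
  unfold upPath
  rw [dif_pos (Nat.le_add_right i d)]
  exact upPathAux_cast (Nat.add_sub_cancel_left i d) rfl _

/-- Each of the `d` up steps contributes the scalar of `G_up`; together they give `d!`. -/
lemma upPathAux_chi (n : ℕ) (S : Finset ℕ) (hS : S ⊆ Finset.Icc 1 n) (h : Sh S) (d : ℕ)
    (x : Slice n (S.card + d)) :
    (upPathAux n S.card d).mulVec (chi n S) x = d.factorial * G n S x.1 := by
  induction d with
  | zero =>
    have : upPathAux n S.card 0 = (1 : Matrix (Slice n S.card) (Slice n S.card) ℝ) := rfl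
    have h2 : (upPathAux n S.card 0).mulVec (chi n S) x = chi n S x := by
      rw [this]
      exact congrFun (Matrix.one_mulVec (chi n S)) x
    rw [h2, chi_eq_G n S hS h x]
    simp
  | succ d ih =>
    have h1 : (upPathAux n S.card (d + 1)).mulVec (chi n S) x
        = (upOp n (S.card + d)).mulVec ((upPathAux n S.card d).mulVec (chi n S)) x := by
      rw [Matrix.mulVec_mulVec]; rfl
    rw [h1, Matrix.mulVec, dotProduct]
    simp only [ih]
    have h2 := sum_le_slice (k := S.card + d) S x.1 x.2
    calc _ = (d.factorial : ℝ) * ∑ y : Slice n (S.card + d),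
          (if ∀ i, y.1 i = true → x.1 i = true then (1 : ℝ) else 0) * G n S y.1 := by
          rw [Finset.mul_sum]
          refine Finset.sum_congr rfl fun y _ => ?_
          simp only [upOp, Matrix.of_apply]
          ring
      _ = _ := by
          rw [h2, Nat.factorial_succ]
          push_cast
          ring

lemma basisVec_eq {n k : ℕ} {S : Finset ℕ} (hS : S ⊆ Finset.Icc 1 n) (h : Sh S)
    (hk : S.card ≤ k) (x : Slice n k) :
    basisVec n k S x = (k - S.card).factorial * G n S x.1 := by
  obtain ⟨d, rfl⟩ := Nat.exists_eq_add_of_le hk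
  rw [basisVec, upPath_add, upPathAux_chi n S hS h, Nat.add_sub_cancel_left]

/-- The factor `(k - |S|)!` cancels in the normalised coefficient. -/
lemma fourier_sq {n k : ℕ} {S : Finset ℕ} (hS : S ⊆ Finset.Icc 1 n) (h : Sh S)
    (F : (Fin n → Bool) → ℝ) :
    fourierSlice n k (fun x => F x.1) S ^ 2
      = if S.card ≤ k ∧ S.card ≤ n - k then ip n S k F ^ 2 / A n S k else 0 := by
  have hI : IsH n (min k (n - k)) S ↔ S.card ≤ k ∧ S.card ≤ n - k := by
    unfold IsH
    rw [le_min_iff]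
    exact ⟨fun h => h.2.1, fun h' => ⟨hS, h', h⟩⟩
  unfold fourierSlice
  by_cases hc : S.card ≤ k ∧ S.card ≤ n - k
  · rw [if_pos (hI.2 hc), if_pos hc]
    have e1 : ∑ x : Slice n k, F x.1 * basisVec n k S x
        = (k - S.card).factorial * ip n S k F := by
      simp only [basisVec_eq hS h hc.1]
      rw [sum_slice (fun x => F x * (((k - S.card).factorial : ℝ) * G n S x)), ip, Finset.mul_sum]
      refine Finset.sum_congr rfl fun x _ => ?_
      simp only [Nat.cast_inj]
      split_ifs <;> ring
    have e2 : ∑ x : Slice n k, basisVec n k S x ^ 2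
        = (k - S.card).factorial ^ 2 * A n S k := by
      simp only [basisVec_eq hS h hc.1]
      rw [sum_slice (fun x => (((k - S.card).factorial : ℝ) * G n S x) ^ 2), A, Finset.mul_sum]
      refine Finset.sum_congr rfl fun x _ => ?_
      simp only [Nat.cast_inj]
      split_ifs <;> ring
    have hA := A_nonneg n S k
    have hf : ((k - S.card).factorial : ℝ) ≠ 0 := by positivity
    rw [e1, e2, div_pow, Real.sq_sqrt (by positivity), mul_pow,
      mul_div_mul_left _ _ (pow_ne_zero 2 hf)]
  · rw [if_neg (fun h => hc (hI.1 h)), if_neg hc]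
    simp

/-- Extension of a function on a slice to the whole cube by zero. -/
noncomputable def liftF {n k : ℕ} (f : Slice n k → ℝ) (x : Fin n → Bool) : ℝ :=
  if h : (Finset.univ.filter fun i => x i = true).card = k then f ⟨x, h⟩ else 0

lemma liftF_coe {n k : ℕ} (f : Slice n k → ℝ) : f = fun x => liftF f x.1 := by
  funext x
  rw [liftF, dif_pos x.2]

lemma catFun_one {n : ℕ} (x : Fin n → Bool) (b : Bool) :
    catFun (n + 1) 1 x (fun _ => b) = snocB x b := by
  funext i
  refine Fin.lastCases ?_ (fun i => ?_) i
  · simp [catFun]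
  · have : ((i.castSucc : Fin (n + 1)) : ℕ) < n + 1 - 1 := by simp
    rw [catFun, dif_pos this, snocB_castSucc]
    rfl

/-- If `b = 1` and `k = 0`, the truncated weight `k - 1` is `0`, but both sides are still equal as
`liftF f` vanishes at every `x ∘ 1`. -/
lemma fourierRestrict_eq {n k : ℕ} (f : Slice (n + 1) k → ℝ) (b : Bool) (S : Finset ℕ) :
    fourierSliceRestrict (n + 1) k 1 f (fun _ => b) S
      = fourierSlice n (k - if b = true then 1 else 0) (fun x => liftF f (snocB x.1 b)) S := by
  have hw : wt (fun _ : Fin 1 => b) = if b = true then 1 else 0 := by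
    cases b <;> simp [wt]
  unfold fourierSliceRestrict
  rw [← hw]
  show fourierSlice n _ _ S = _
  congr 1
  funext x
  rw [← catFun_one]
  rfl

/-! ### The identity in two dimensions -/

/-- Parseval's identity in the plane for two orthogonal bases. If `u`, `v` are orthogonal with
`‖u‖² = a`, `‖v‖² = b` and `p a = q b`, then `u + v` and `(-p u + q v) / c` are orthogonal
too; here `α` and `β` are the inner products of a vector with `u` and `v`. -/
lemma plane {p q c a b α β : ℝ} (hp : 0 < p) (hq : 0 < q) (hc0 : c ≠ 0)
    (hb : 0 ≤ b) (h : p * a = q * b) (ha0 : a = 0 → α = 0) (hb0 : b = 0 → β = 0) :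
    α ^ 2 / a + β ^ 2 / b = (α + β) ^ 2 / (a + b)
      + ((-p * α + q * β) / c) ^ 2 / ((p ^ 2 * a + q ^ 2 * b) / c ^ 2) := by
  have e : a = q * b / p := by field_simp; linarith
  rw [div_pow, div_div_div_cancel_right₀ (pow_ne_zero 2 hc0)]
  rcases hb.eq_or_lt with hb | hb
  · have hb := hb.symm
    have ha : a = 0 := by rw [e, hb]; simp
    rw [ha0 ha, hb0 hb]; simp
  · have e1 : a + b = (p + q) * b / p := by rw [e]; field_simp; ring
    have e2 : p ^ 2 * a + q ^ 2 * b = q * (p + q) * b := by rw [e]; field_simp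
    have hpq : p + q ≠ 0 := by positivity
    rw [e1, e2, e]
    have := hb.ne'
    field_simp
    ring


/-! ### Parseval for restrictions -/

/-- For every `S ⊆ [n-1]`: `f̂₀(S)² + f̂₁(S)² = f̂(S)² + f̂(S ∪ {n})²`. -/
theorem stmt15 (n k : ℕ) (hn : 1 ≤ n) (hk : k ≤ n) (f : Slice n k → ℝ)
    (S : Finset ℕ) (hS : S ⊆ Finset.Icc 1 (n - 1)) :
    fourierSliceRestrict n k 1 f (fun _ => false) S ^ 2
        + fourierSliceRestrict n k 1 f (fun _ => true) S ^ 2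
      = fourierSlice n k f S ^ 2 + fourierSlice n k f (insert n S) ^ 2 := by
  obtain ⟨n, rfl⟩ := Nat.exists_eq_add_of_le' hn
  rw [Nat.add_sub_cancel] at hS
  have hm : n + 1 ∉ S := fun h => by have := Finset.mem_Icc.1 (hS h); omega
  have hS' : S ⊆ Finset.Icc 1 (n + 1) := hS.trans (Finset.Icc_subset_Icc_right (by omega))
  have hT : insert (n + 1) S ⊆ Finset.Icc 1 (n + 1) :=
    Finset.insert_subset (by simp) hS'
  rw [fourierRestrict_eq, fourierRestrict_eq]
  by_cases h : Sh S
  swap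
  · have hI : ∀ n m, ¬ IsH n m S := fun _ _ h' => h h'.2.2
    have hI' : ∀ m, ¬ IsH (n + 1) m (insert (n + 1) S) :=
      fun _ h' => h ((Sh_insert hS).1 h'.2.2).1
    simp [fourierSlice, hI, hI']
  have hcard := Sh_card hS h
  have hcT : (insert (n + 1) S).card = S.card + 1 := Finset.card_insert_of_notMem hm
  have r0 := fourier_sq (k := k) hS h (fun x => liftF f (snocB x false))
  have r1 := fourier_sq (k := k - 1) hS h (fun x => liftF f (snocB x true))
  have r2 := fourier_sq (k := k) hS' h (liftF f)
  have r3 : fourierSlice (n + 1) k f (insert (n + 1) S) ^ 2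
      = if S.card + 1 ≤ k ∧ S.card + 1 ≤ n + 1 - k then
        ip (n + 1) (insert (n + 1) S) k (liftF f) ^ 2 / A (n + 1) (insert (n + 1) S) k else 0 := by
    by_cases hTs : Sh (insert (n + 1) S)
    · have := fourier_sq (k := k) hT hTs (liftF f)
      rwa [← liftF_coe, hcT] at this
    · rw [if_neg]
      · have : ¬ IsH (n + 1) (min k (n + 1 - k)) (insert (n + 1) S) := fun h' => hTs h'.2.2
        simp [fourierSlice, this]
      · intro h'
        exact hTs ((Sh_insert hS).2 ⟨h, by omega⟩)
  rw [← liftF_coe] at r2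
  change fourierSlice n k (fun x => liftF f (snocB x.1 false)) S ^ 2
    + fourierSlice n (k - 1) (fun x => liftF f (snocB x.1 true)) S ^ 2 = _
  rw [r0, r1, r2, r3, ip_of_not_mem hm, A_of_not_mem hm, ip_of_mem (Finset.mem_insert_self _ _),
    A_of_mem (Finset.mem_insert_self _ _), Finset.erase_insert hm]
  have hrec := A_rec n S k
  have ha0 := fun h => ip_eq_zero (n := n) (S := S) (j := k) h (fun x => liftF f (snocB x false))
  have hb0 := fun h => ip_eq_zero (n := n) (S := S) (j := k - 1) h
    (fun x => liftF f (snocB x true))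
  have hb := A_nonneg n S (k - 1)
  by_cases c1 : S.card + 1 ≤ k
  · have hk1 : ((k - 1 : ℕ) : ℤ) = (k : ℤ) - 1 := by omega
    rw [hk1]
    have hp : (0 : ℝ) < k - S.card := by
      have : (S.card + 1 : ℝ) ≤ k := by exact_mod_cast c1
      linarith
    push_cast at hrec ⊢
    by_cases c2 : S.card + 1 ≤ n + 1 - k
    · have c2' : (S.card + k : ℝ) ≤ n := by
        have : S.card + k ≤ n := by omega
        exact_mod_cast this
      rw [if_pos (by omega), if_pos (by omega), if_pos (by omega), if_pos (by omega)]
      exact plane hp (by linarith) (by intro h0; linarith) hb hrec ha0 hb0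
    · rw [if_neg (c := _ ∧ S.card + 1 ≤ _) (by omega)]
      -- On the boundary `|S| + k = n + 1`, the function `G n S` vanishes on the slice of weight `k`.
      by_cases c3 : S.card + k = n + 1
      · have c3' : (S.card + k : ℝ) = n + 1 := by exact_mod_cast c3
        have ha : A n S k = 0 := by
          have : ((k : ℝ) - S.card) * A n S k = 0 := by
            rw [hrec, show (n : ℝ) - k - S.card + 1 = 0 by linarith, zero_mul]
          exact (mul_eq_zero.1 this).resolve_left hp.ne'
        rw [if_pos (c := _ ∧ S.card ≤ n - (k - 1)) (by omega),
          if_pos (c := _ ∧ S.card ≤ n + 1 - k) (by omega), ha0 ha, ha]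
        simp
      · rw [if_neg (by omega), if_neg (by omega), if_neg (by omega)]
  · rw [if_neg (c := S.card + 1 ≤ _ ∧ _) (by omega)]
    -- For `k = 0` the condition `|S| ≤ k - 1` holds by truncation, but then `f₁` is empty.
    have z1 : (if S.card ≤ k - 1 ∧ S.card ≤ n - (k - 1) then
        ip n S ((k - 1 : ℕ) : ℤ) (fun x => liftF f (snocB x true)) ^ 2 / A n S ((k - 1 : ℕ) : ℤ)
        else 0) = 0 := by
      split_ifs with hc
      · have hk0 : k = 0 := by omega
        subst hk0
        have : (fun x : Fin n → Bool => liftF f (snocB x true)) = fun _ => 0 := by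
          funext x
          refine dif_neg fun h' => ?_
          have h2 : wt (snocB x true) = 0 := h'
          rw [wt_snocB_true] at h2
          omega
        rw [this]
        simp [ip]
      · rfl
    rw [z1]
    -- For `|S| = k` the function `G n S` vanishes on the slice of weight `k - 1`.
    by_cases c2 : S.card = k
    · have hrb : ((n : ℝ) - k - S.card + 1) * A n S (k - 1) = 0 := by
        rw [Int.cast_natCast] at hrec
        rw [← hrec, c2, sub_self, zero_mul]
      have hq : (n : ℝ) - k - S.card + 1 ≠ 0 := by
        have : (2 * S.card : ℝ) ≤ n := by exact_mod_cast hcard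
        have c2' : (S.card : ℝ) = k := by exact_mod_cast c2
        intro h0
        linarith
      have hbz := (mul_eq_zero.1 hrb).resolve_left hq
      rw [hb0 hbz, hbz, if_pos (by omega), if_pos (by omega)]
      simp
    · rw [if_neg (by omega), if_neg (by omega)]
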